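/- arXiv:2002.01178 — 5 statements merged into one kernel-verified Lean document; each statement's English description precedes it below -/
import Mathlib

section
/- Let x and y be binary strings with x[1] = y[1], x[|x|] = y[|y|], and m' := |x̃| ≥ n' := |ỹ|. Then m' − n' is even, and dtw(x,y)² equals the minimum, over all choices of r := (m' − n')/2 indices 2 ≤ i_1 < i_2 < … < i_r ≤ m' − 1 satisfying i_{j+1} ≥ i_j + 2 for all j, of the sum Σ_{j=1}^r |x^{(i_j)}| (for r = 0 this minimum is 0). In particular, dtw(x,y)² equals the optimal value of the Min 1-Separated Sum instance ((|x^{(2)}|, …, |x^{(m'−1)}|), (m'−n')/2). -/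
/-- One step of a warping path: move down, right, or diagonally. -/
def wpStep (a b : ℕ × ℕ) : Prop :=
  (b.1 = a.1 + 1 ∧ b.2 = a.2) ∨ (b.1 = a.1 ∧ b.2 = a.2 + 1) ∨
    (b.1 = a.1 + 1 ∧ b.2 = a.2 + 1)

/-- A warping path of order `m × n` (0-based indices). -/
def IsWarpingPath (m n : ℕ) (p : List (ℕ × ℕ)) : Prop :=
  p.head? = some (0, 0) ∧ p.getLast? = some (m - 1, n - 1) ∧
    List.Chain' wpStep p ∧ ∀ q ∈ p, q.1 < m ∧ q.2 < n

/-- The cost of aligning binary strings `x` and `y` along path `p`: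
the number of aligned mismatching pairs (for binary symbols,
`(x[i] - y[j])^2` is `0` if the symbols agree and `1` otherwise). -/
def pathCost (x y : List Bool) (p : List (ℕ × ℕ)) : ℕ :=
  (p.map fun q => if x.getD q.1 false = y.getD q.2 false then 0 else 1).sum

/-- The squared dynamic time warping distance `dtw(x,y)²` of two binary strings. -/
noncomputable def dtwSq (x y : List Bool) : ℕ :=
  sInf {c | ∃ p, IsWarpingPath x.length y.length p ∧ pathCost x y p = c}

/-- The dynamic time warping distance `dtw(x,y)`. -/
noncomputable def dtw (x y : List Bool) : ℝ :=
  Real.sqrt (dtwSq x y)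

/-- The condensation of a binary string: collapse every maximal run of equal
consecutive symbols to a single symbol. -/
def condense : List Bool → List Bool
  | [] => []
  | [a] => [a]
  | a :: b :: rest => if a = b then condense (b :: rest) else a :: condense (b :: rest)

/-- Auxiliary function collecting the block sizes of a binary string. -/
def blockSizesAux : Bool → ℕ → List Bool → List ℕ
  | _, cnt, [] => [cnt]
  | cur, cnt, a :: rest =>
      if a = cur then blockSizesAux cur (cnt + 1) rest
      else cnt :: blockSizesAux a 1 rest

/-- The list of block sizes of a binary string (sizes of the maximal runs
of equal consecutive symbols, from left to right). -/
def blockSizes : List Bool → List ℕ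
  | [] => []
  | a :: rest => blockSizesAux a 1 rest

/-- The objective `F(z) = Σᵢ dtw(sᵢ, z)²`. -/
noncomputable def Fobj (ss : List (List Bool)) (z : List Bool) : ℕ :=
  (ss.map fun s => dtwSq s z).sum

/-- `z` is a mean of the strings `ss`: a nonempty binary string minimizing
`F` among all nonempty binary strings. -/
def IsMean (ss : List (List Bool)) (z : List Bool) : Prop :=
  z ≠ [] ∧ ∀ w : List Bool, w ≠ [] → Fobj ss z ≤ Fobj ss w

/-- The optimal value of a Min 1-Separated Sum instance with integers `b`
(1-based indexing) and selection size `r`: minimize the sum of `r` selected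
integers, no two of which are consecutive. -/
noncomputable def mssValue (b : List ℕ) (r : ℕ) : ℕ :=
  sInf {s | ∃ I : List ℕ, I.length = r ∧ (∀ i ∈ I, 1 ≤ i ∧ i ≤ b.length) ∧
    List.Chain' (fun a c => a + 2 ≤ c) I ∧
    (I.map fun i => b.getD (i - 1) 0).sum = s}

inductive BAlign : List Bool → List Bool → ℕ → Prop
  | base (a b : Bool) : BAlign [a] [b] (if a = b then 0 else 1)
  | left (a b : Bool) (x y : List Bool) (c : ℕ) : BAlign x (b :: y) c →
      BAlign (a :: x) (b :: y) ((if a = b then 0 else 1) + c)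
  | right (a b : Bool) (x y : List Bool) (c : ℕ) : BAlign (a :: x) y c →
      BAlign (a :: x) (b :: y) ((if a = b then 0 else 1) + c)
  | diag (a b : Bool) (x y : List Bool) (c : ℕ) : BAlign x y c →
      BAlign (a :: x) (b :: y) ((if a = b then 0 else 1) + c)

/-- selections of `r` nonadjacent entries, the last entry excluded -/
inductive BSel : List ℕ → ℕ → ℕ → Prop
  | nil (B : List ℕ) : BSel B 0 0
  | skip (b : ℕ) (B : List ℕ) (r s : ℕ) : BSel B r s → BSel (b :: B) r s
  | take (b c : ℕ) (B : List ℕ) (r s : ℕ) : BSel B r s → BSel (b :: c :: B) (r + 1) (b + s)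

theorem bsa_succ (a : Bool) (k : ℕ) (l : List Bool) :
    ∃ h t, blockSizesAux a k l = h :: t ∧ blockSizesAux a (k + 1) l = (h + 1) :: t := by
  induction l generalizing k with
  | nil => exact ⟨k, [], rfl, rfl⟩
  | cons b l ih =>
    by_cases h : b = a
    · simpa [blockSizesAux, h] using ih (k + 1)
    · simp [blockSizesAux, h]

theorem bs_same (a : Bool) (l : List Bool) :
    ∃ h t, blockSizes (a :: l) = h :: t ∧ blockSizes (a :: a :: l) = (h + 1) :: t := by
  simpa [blockSizes, blockSizesAux] using bsa_succ a 1 l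

theorem bs_new (a b : Bool) (h : b ≠ a) (l : List Bool) :
    blockSizes (a :: b :: l) = 1 :: blockSizes (b :: l) := by
  simp [blockSizes, blockSizesAux, h]

theorem bs_cons (a : Bool) (l : List Bool) : ∃ h t, blockSizes (a :: l) = h :: t := by
  obtain ⟨h, t, h1, _⟩ := bs_same a l
  exact ⟨h, t, h1⟩

theorem condense_len (x : List Bool) : (condense x).length = (blockSizes x).length := by
  induction x with
  | nil => rfl
  | cons a l ih =>
    cases l with
    | nil => rfl
    | cons b l =>
      by_cases h : a = b
      · subst h
        obtain ⟨h, t, h1, h2⟩ := bs_same a l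
        rw [h1] at ih
        simp [condense, h2, ih]
      · rw [bs_new a b (Ne.symm h)]
        simp [condense, h, ih]

theorem bs_parity (a : Bool) (x : List Bool) :
    (blockSizes (a :: x)).length % 2 = if (a :: x).getLast? = some a then 1 else 0 := by
  induction x generalizing a with
  | nil => simp [blockSizes, blockSizesAux]
  | cons b l ih =>
    have ihb := ih b
    by_cases h : b = a
    · subst h
      obtain ⟨h, t, h1, h2⟩ := bs_same b l
      rw [h1] at ihb
      rw [h2, List.getLast?_cons_cons]
      simpa using ihb
    · rw [bs_new a b h, List.getLast?_cons_cons]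
      rw [List.length_cons]
      obtain ⟨z, hz⟩ : ∃ z, (b :: l).getLast? = some z := by
        simp [List.getLast?_cons]
      rw [hz] at ihb ⊢
      revert ihb h
      cases a <;> cases b <;> cases z <;> simp <;> omega

theorem BSel.bound {B : List ℕ} {r s : ℕ} (h : BSel B r s) : 2 * r ≤ B.length := by
  induction h with
  | nil => simp
  | skip b B r s _ ih => simp; omega
  | take b c B r s _ ih => simp; omega

theorem BSel.drop_first {B : List ℕ} {r s : ℕ} (h : BSel B r s) :
    ∀ r', r = r' + 1 → ∃ s' ≤ s, BSel B.tail r' s' := by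
  induction h with
  | nil => intro r' h; omega
  | skip b B r s h ih =>
    intro r' hr
    obtain ⟨s', hs, h'⟩ := ih r' hr
    refine ⟨s', hs, ?_⟩
    cases B with
    | nil => exact h'
    | cons c B => exact BSel.skip _ _ _ _ h'
  | take b c B r s h ih =>
    intro r' hr
    obtain rfl : r = r' := by omega
    exact ⟨s, by omega, BSel.skip _ _ _ _ h⟩

theorem BSel.incr {h : ℕ} {t : List ℕ} {r s : ℕ} (H : BSel (h :: t) r s) :
    ∃ s' ≤ s + 1, BSel ((h + 1) :: t) r s' := by
  cases H with
  | nil => exact ⟨0, by omega, .nil _⟩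
  | skip _ _ _ _ H => exact ⟨s, by omega, .skip _ _ _ _ H⟩
  | take _ c B r s H => exact ⟨h + 1 + s, by omega, .take _ _ _ _ _ H⟩

theorem balign_lower {x y : List Bool} {c : ℕ} (H : BAlign x y c) :
    ∀ r, (x.head? = y.head? → 2 * r + (blockSizes y).length = (blockSizes x).length →
        ∃ s ≤ c, BSel (blockSizes x).tail r s) ∧
      (x.head? ≠ y.head? → 2 * r + (blockSizes y).length = (blockSizes x).length + 1 →
        ∃ s ≤ c, BSel (blockSizes x) r s) := by
  induction H with
  | base a b =>
    intro r
    simp only [blockSizes, blockSizesAux, List.length_cons, List.length_nil]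
    refine ⟨fun _ h => ?_, fun _ h => by omega⟩
    obtain rfl : r = 0 := by omega
    exact ⟨0, by omega, .nil _⟩
  | left a b x y c H ih =>
    intro r
    rcases Nat.eq_zero_or_pos r with rfl | hr
    · exact ⟨fun _ _ => ⟨0, by omega, .nil _⟩, fun _ _ => ⟨0, by omega, .nil _⟩⟩
    obtain ⟨r, rfl⟩ : ∃ r', r = r' + 1 := ⟨r - 1, by omega⟩
    cases x with
    | nil => cases H
    | cons a' x =>
    obtain ⟨h, t, h1, h2⟩ := bs_same a x
    obtain ⟨h', t', h1'⟩ := bs_cons a' x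
    by_cases hab : a = b
    · subst hab
      refine ⟨fun _ hl => ?_, fun h => absurd rfl h⟩
      by_cases ha : a' = a
      · subst ha
        obtain ⟨s, hs, hB⟩ := (ih (r + 1)).1 rfl (by rw [h2] at hl; rw [h1]; simpa using hl)
        refine ⟨s, by omega, ?_⟩
        rw [h2]; rw [h1] at hB; exact hB
      · rw [bs_new a a' ha] at hl ⊢
        obtain ⟨s, hs, hB⟩ := (ih (r + 1)).2 (by simpa using ha) (by simpa using hl)
        exact ⟨s, by omega, hB⟩
    · refine ⟨fun h => absurd h (by simpa using hab), fun _ hl => ?_⟩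
      by_cases ha : a' = a
      · subst ha
        obtain ⟨s, hs, hB⟩ := (ih (r + 1)).2 (by simpa using hab)
          (by rw [h2] at hl; rw [h1]; simpa using hl)
        rw [h1] at hB; rw [h2]
        obtain ⟨s', hs', hB'⟩ := hB.incr
        exact ⟨s', by simp [hab]; omega, hB'⟩
      · have : a' = b := by revert ha hab; cases a <;> cases b <;> cases a' <;> simp
        subst this
        rw [bs_new a a' ha] at hl ⊢
        obtain ⟨s, hs, hB⟩ := (ih r).1 rfl (by simp at hl; omega)
        rw [h1'] at hB ⊢
        exact ⟨1 + s, by simp [hab]; omega, .take _ _ _ _ _ hB⟩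
  | right a b x y c H ih =>
    intro r
    rcases Nat.eq_zero_or_pos r with rfl | hr
    · exact ⟨fun _ _ => ⟨0, by omega, .nil _⟩, fun _ _ => ⟨0, by omega, .nil _⟩⟩
    cases y with
    | nil => cases H
    | cons b' y =>
    obtain ⟨h, t, h1, h2⟩ := bs_same b y
    obtain ⟨h', t', h1'⟩ := bs_cons a x
    by_cases hb : b' = b
    · subst hb
      rw [h2]; rw [h1] at ih
      refine ⟨fun e hl => ?_, fun e hl => ?_⟩
      · obtain ⟨s, hs, hB⟩ := (ih r).1 e hl
        exact ⟨s, by omega, hB⟩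
      · obtain ⟨s, hs, hB⟩ := (ih r).2 e hl
        exact ⟨s, by omega, hB⟩
    · rw [bs_new b b' hb]
      refine ⟨fun e hl => ?_, fun e hl => ?_⟩
      · obtain rfl : a = b := by simpa using e
        obtain ⟨s, hs, hB⟩ := (ih (r + 1)).2 (by simpa using Ne.symm hb) (by simp at hl; omega)
        obtain ⟨s', hs', hB'⟩ := hB.drop_first r rfl
        exact ⟨s', by omega, hB'⟩
      · have : a = b' := by
          revert hb e; cases a <;> cases b <;> cases b' <;> simp
        subst this
        obtain ⟨s, hs, hB⟩ := (ih r).1 rfl (by simp at hl; omega)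
        rw [h1'] at hB ⊢
        exact ⟨s, by omega, .skip _ _ _ _ hB⟩
  | diag a b x y c H ih =>
    intro r
    rcases Nat.eq_zero_or_pos r with rfl | hr
    · exact ⟨fun _ _ => ⟨0, by omega, .nil _⟩, fun _ _ => ⟨0, by omega, .nil _⟩⟩
    obtain ⟨r, rfl⟩ : ∃ r', r = r' + 1 := ⟨r - 1, by omega⟩
    cases x with
    | nil => cases H
    | cons a' x =>
    cases y with
    | nil => cases H
    | cons b' y =>
    obtain ⟨h, t, h1, h2⟩ := bs_same b y
    obtain ⟨g, u, g1, g2⟩ := bs_same a x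
    obtain ⟨h', t', h1'⟩ := bs_cons a' x
    by_cases ha : a' = a <;> by_cases hb : b' = b
    · subst ha; subst hb
      rw [h2, g2]; rw [h1, g1] at ih
      refine ⟨fun e hl => ?_, fun e hl => ?_⟩
      · obtain ⟨s, hs, hB⟩ := (ih (r+1)).1 e hl
        exact ⟨s, by omega, hB⟩
      · obtain ⟨s, hs, hB⟩ := (ih (r+1)).2 e hl
        obtain ⟨s', hs', hB'⟩ := hB.incr
        have hab : a' ≠ b' := by simpa using e
        exact ⟨s', by simp [hab]; omega, hB'⟩
    · subst ha
      rw [bs_new b b' hb, g2]; rw [g1] at ih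
      refine ⟨fun e hl => ?_, fun e hl => ?_⟩
      · obtain rfl : a' = b := by simpa using e
        obtain ⟨s, hs, hB⟩ := (ih (r + 1 + 1)).2 (by simpa using Ne.symm hb)
          (by simp at hl ⊢; omega)
        obtain ⟨s', hs', hB'⟩ := hB.drop_first (r+1) rfl
        exact ⟨s', by omega, hB'⟩
      · have : a' = b' := by
          revert hb e; cases a' <;> cases b <;> cases b' <;> simp
        subst this
        obtain ⟨s, hs, hB⟩ := (ih (r+1)).1 rfl (by simp at hl ⊢; omega)
        exact ⟨s, by omega, .skip _ _ _ _ hB⟩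
    · subst hb
      rw [bs_new a a' ha, h2]; rw [h1] at ih
      refine ⟨fun e hl => ?_, fun e hl => ?_⟩
      · obtain rfl : a = b' := by simpa using e
        obtain ⟨s, hs, hB⟩ := (ih (r + 1)).2 (by simpa using ha) (by simp at hl ⊢; omega)
        exact ⟨s, by omega, hB⟩
      · have hab : a ≠ b' := by simpa using e
        have : a' = b' := by
          revert ha e; cases a <;> cases a' <;> cases b' <;> simp
        subst this
        obtain ⟨s, hs, hB⟩ := (ih r).1 rfl (by simp at hl ⊢; omega)
        rw [h1'] at hB ⊢
        exact ⟨1 + s, by simp [hab]; omega, .take _ _ _ _ _ hB⟩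
    · rw [bs_new a a' ha, bs_new b b' hb]
      refine ⟨fun e hl => ?_, fun e hl => ?_⟩
      · have : a' = b' := by
          revert ha hb e; cases a <;> cases a' <;> cases b <;> cases b' <;> simp
        subst this
        obtain ⟨s, hs, hB⟩ := (ih (r + 1)).1 rfl (by simp at hl ⊢; omega)
        rw [h1'] at hB ⊢
        exact ⟨s, by omega, .skip _ _ _ _ hB⟩
      · have : a' ≠ b' := by
          revert ha hb e; cases a <;> cases a' <;> cases b <;> cases b' <;> simp
        obtain ⟨s, hs, hB⟩ := (ih (r + 1)).2 (by simpa using this) (by simp at hl ⊢; omega)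
        exact ⟨s, by omega, .skip _ _ _ _ hB⟩

theorem balign_upper (N : ℕ) : ∀ (x y : List Bool) (a : Bool), x.length + y.length ≤ N →
    (∀ r s, 2 * r + (blockSizes (a :: y)).length = (blockSizes (a :: x)).length →
      BSel (blockSizes (a :: x)).tail r s → BAlign (a :: x) (a :: y) s) ∧
    (∀ r s b c B, blockSizes ((!a) :: x) = b :: c :: B → BSel B r s →
      2 * r + (blockSizes (a :: y)).length = B.length + 1 →
      BAlign ((!a) :: x) (a :: y) (b + s)) := by
  induction N with
  | zero =>
    intro x y a hN
    have hx : x = [] := List.eq_nil_of_length_eq_zero (by omega)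
    have hy : y = [] := List.eq_nil_of_length_eq_zero (by omega)
    subst hx; subst hy
    refine ⟨fun r s hl hB => ?_, fun r s b c B h => ?_⟩
    · cases hB with
      | nil => simpa using BAlign.base a a
    · simp [blockSizes, blockSizesAux] at h
  | succ N ih =>
    intro x y a hN
    refine ⟨fun r s hl hB => ?_, fun r s b c B h hB hl => ?_⟩
    · by_cases hx : ∃ x', x = a :: x'
      · obtain ⟨x', rfl⟩ := hx
        obtain ⟨h, t, h1, h2⟩ := bs_same a x'
        rw [h2] at hl hB
        have := (ih x' y a (by simp at hN; omega)).1 r s (by rw [h1]; simpa using hl)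
          (by rw [h1]; exact hB)
        simpa using BAlign.left a a _ _ _ this
      by_cases hy : ∃ y', y = a :: y'
      · obtain ⟨y', rfl⟩ := hy
        obtain ⟨h, t, h1, h2⟩ := bs_same a y'
        rw [h2] at hl
        have := (ih x y' a (by simp at hN; omega)).1 r s (by rw [h1]; simpa using hl) hB
        simpa using BAlign.right a a _ _ _ this
      cases x with
      | nil =>
        cases y with
        | nil =>
          cases hB with
          | nil => simpa using BAlign.base a a
        | cons b y =>
          exfalso
          have hb : b ≠ a := fun h => hy ⟨y, by rw [h]⟩
          obtain ⟨h, t, h1⟩ := bs_cons b y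
          rw [bs_new a b hb, h1] at hl
          simp [blockSizes, blockSizesAux] at hl
          omega
      | cons a' x =>
        have ha : a' ≠ a := fun h => hx ⟨x, by rw [h]⟩
        obtain rfl : a' = !a := by revert ha; cases a <;> cases a' <;> simp
        rw [bs_new a _ ha] at hl hB
        simp only [List.tail_cons, List.length_cons] at hl hB
        obtain ⟨h, t, h1⟩ := bs_cons (!a) x
        rw [h1] at hl hB
        have key : BSel t r s → BAlign (a :: (!a) :: x) (a :: y) s := by
          intro hB
          cases y with
          | nil =>
            exfalso
            have := hB.bound
            simp [blockSizes, blockSizesAux] at hl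
            omega
          | cons b y =>
            have hb : b ≠ a := fun h => hy ⟨y, by rw [h]⟩
            obtain rfl : b = !a := by revert hb; cases a <;> cases b <;> simp
            rw [bs_new a _ ha] at hl
            have := (ih x y (!a) (by simp at hN; omega)).1 r s
              (by rw [h1]; simp at hl ⊢; omega) (by rw [h1]; exact hB)
            simpa using BAlign.diag a a _ _ _ this
        cases hB with
        | nil => exact key (.nil _)
        | skip _ _ _ _ hB => exact key hB
        | take _ c B r s hB =>
          have := (ih x y a (by simp at hN; omega)).2 r s h c B h1 hB (by simp at hl; omega)
          simpa using BAlign.left a a _ _ _ this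
    · cases x with
      | nil => simp [blockSizes, blockSizesAux] at h
      | cons a' x =>
        by_cases ha : a' = !a
        · subst ha
          obtain ⟨g, u, g1, g2⟩ := bs_same (!a) x
          rw [g2] at h
          obtain ⟨rfl, rfl⟩ : g + 1 = b ∧ u = c :: B := by simpa using h
          have := (ih x y a (by simp at hN; omega)).2 r s g c B g1 hB hl
          have := BAlign.left (!a) a _ _ _ this
          have e : (if (!a) = a then 0 else 1) + (g + s) = g + 1 + s := by
            cases a <;> simp <;> omega
          rwa [e] at this
        · obtain rfl : a' = a := by revert ha; cases a <;> cases a' <;> simp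
          rw [bs_new _ _ ha] at h
          obtain ⟨rfl, h'⟩ : 1 = b ∧ blockSizes (a' :: x) = c :: B := by simpa using h
          have := (ih x y a' (by simp at hN; omega)).1 r s (by rw [h']; simpa using hl)
            (by rw [h']; exact hB)
          have := BAlign.left (!a') a' _ _ _ this
          have e : (if (!a') = a' then 0 else 1) + s = 1 + s := by
            cases a' <;> simp
          rwa [e] at this

theorem path_to_align (x y : List Bool) (p : List (ℕ × ℕ)) :
    ∀ q, (q :: p).getLast? = some (x.length - 1, y.length - 1) →
    List.IsChain wpStep (q :: p) → (∀ z ∈ q :: p, z.1 < x.length ∧ z.2 < y.length) →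
    BAlign (x.drop q.1) (y.drop q.2) (pathCost x y (q :: p)) := by
  induction p with
  | nil =>
    intro q hlast _ hb
    obtain ⟨h1, h2⟩ := hb q (by simp)
    simp at hlast
    subst hlast
    simp only at h1 h2
    rw [List.drop_eq_getElem_cons h1, List.drop_eq_getElem_cons h2]
    rw [List.drop_eq_nil_of_le (by omega), List.drop_eq_nil_of_le (by omega)]
    have := BAlign.base (x[x.length - 1]) (y[y.length - 1])
    simpa only [pathCost, List.map_cons, List.map_nil, List.sum_cons, List.sum_nil, Nat.add_zero,
      List.getD_eq_getElem _ _ h1, List.getD_eq_getElem _ _ h2] using this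
  | cons q' p ih =>
    intro q hlast hc hb
    obtain ⟨h1, h2⟩ := hb q (by simp)
    rw [List.getLast?_cons_cons] at hlast
    rw [List.isChain_cons_cons] at hc
    have := ih q' hlast hc.2 (fun z hz => hb z (List.mem_cons_of_mem _ hz))
    have e : pathCost x y (q :: q' :: p) = (if x[q.1] = y[q.2] then 0 else 1)
        + pathCost x y (q' :: p) := by
      simp only [pathCost, List.map_cons, List.sum_cons,
        List.getD_eq_getElem _ _ h1, List.getD_eq_getElem _ _ h2]
    rw [e]
    rcases hc.1 with ⟨e1, e2⟩ | ⟨e1, e2⟩ | ⟨e1, e2⟩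
    · rw [e1, e2] at this
      rw [List.drop_eq_getElem_cons h2] at this ⊢
      rw [List.drop_eq_getElem_cons h1]
      exact .left _ _ _ _ _ this
    · rw [e1, e2] at this
      rw [List.drop_eq_getElem_cons h1] at this ⊢
      rw [List.drop_eq_getElem_cons h2]
      exact .right _ _ _ _ _ this
    · rw [e1, e2] at this
      rw [List.drop_eq_getElem_cons h1, List.drop_eq_getElem_cons h2]
      exact .diag _ _ _ _ _ this

theorem drop_info {x u : List Bool} {a : Bool} {i : ℕ} (h : a :: u = x.drop i) :
    i < x.length ∧ x.getD i false = a ∧ u = x.drop (i + 1) := by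
  have hi : i < x.length := by
    by_contra hh
    rw [List.drop_eq_nil_of_le (by omega)] at h
    cases h
  rw [List.drop_eq_getElem_cons hi] at h
  injection h with h1 h2
  exact ⟨hi, by rw [List.getD_eq_getElem _ _ hi, h1], h2⟩

theorem path_extend (x y : List Bool) (i j i' j' c : ℕ) (hi : i < x.length) (hj : j < y.length)
    (hs : wpStep (i, j) (i', j'))
    (H : ∃ p, p.head? = some (i', j') ∧ p.getLast? = some (x.length - 1, y.length - 1) ∧
      List.IsChain wpStep p ∧ (∀ q ∈ p, q.1 < x.length ∧ q.2 < y.length) ∧ pathCost x y p = c) :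
    ∃ p, p.head? = some (i, j) ∧ p.getLast? = some (x.length - 1, y.length - 1) ∧
      List.IsChain wpStep p ∧ (∀ q ∈ p, q.1 < x.length ∧ q.2 < y.length) ∧
      pathCost x y p = (if x.getD i false = y.getD j false then 0 else 1) + c := by
  obtain ⟨p, h1, h2, h3, h4, h5⟩ := H
  cases p with
  | nil => simp at h1
  | cons q p =>
    obtain rfl : q = (i', j') := by simpa using h1
    refine ⟨(i, j) :: (i', j') :: p, rfl, ?_, ?_, ?_, ?_⟩
    · rw [List.getLast?_cons_cons]; exact h2
    · rw [List.isChain_cons_cons]; exact ⟨hs, h3⟩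
    · intro q hq
      rcases List.mem_cons.1 hq with rfl | hq
      · exact ⟨hi, hj⟩
      · exact h4 q hq
    · rw [← h5]; simp only [pathCost, List.map_cons, List.sum_cons]

theorem align_to_path (x y u v : List Bool) (c : ℕ) (H : BAlign u v c) :
    ∀ i j, u = x.drop i → v = y.drop j →
    ∃ p, p.head? = some (i, j) ∧ p.getLast? = some (x.length - 1, y.length - 1) ∧
      List.IsChain wpStep p ∧ (∀ q ∈ p, q.1 < x.length ∧ q.2 < y.length) ∧ pathCost x y p = c := by
  induction H with
  | base a b =>
    intro i j hu hv
    obtain ⟨h1, h2, h3⟩ := drop_info hu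
    obtain ⟨k1, k2, k3⟩ := drop_info hv
    have h4 := List.drop_eq_nil_iff.1 h3.symm
    have k4 := List.drop_eq_nil_iff.1 k3.symm
    refine ⟨[(i, j)], rfl, ?_, by simp, by simp [h1, k1], ?_⟩
    · simp; omega
    · simp only [pathCost, List.map_cons, List.map_nil, List.sum_cons, List.sum_nil, h2, k2,
        Nat.add_zero]
  | left a b u v c _ ih =>
    intro i j hu hv
    obtain ⟨h1, h2, h3⟩ := drop_info hu
    obtain ⟨k1, k2, k3⟩ := drop_info hv
    rw [← h2, ← k2]
    exact path_extend x y i j _ _ c h1 k1 (Or.inl ⟨rfl, rfl⟩) (ih _ _ h3 hv)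
  | right a b u v c _ ih =>
    intro i j hu hv
    obtain ⟨h1, h2, h3⟩ := drop_info hu
    obtain ⟨k1, k2, k3⟩ := drop_info hv
    rw [← h2, ← k2]
    exact path_extend x y i j i (j + 1) c h1 k1 (Or.inr (Or.inl ⟨rfl, rfl⟩)) (ih _ _ hu k3)
  | diag a b u v c _ ih =>
    intro i j hu hv
    obtain ⟨h1, h2, h3⟩ := drop_info hu
    obtain ⟨k1, k2, k3⟩ := drop_info hv
    rw [← h2, ← k2]
    exact path_extend x y i j _ _ c h1 k1 (Or.inr (Or.inr ⟨rfl, rfl⟩)) (ih _ _ h3 k3)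

theorem dtwSq_eq (x y : List Bool) : dtwSq x y = sInf {c | BAlign x y c} := by
  unfold dtwSq
  congr 1
  ext c
  constructor
  · rintro ⟨p, ⟨h1, h2, h3, h4⟩, h5⟩
    cases p with
    | nil => simp at h1
    | cons q p =>
      obtain rfl : q = (0, 0) := by simpa using h1
      have := path_to_align x y p (0, 0) h2 h3 h4
      rw [h5] at this
      simpa using this
  · intro H
    obtain ⟨p, h1, h2, h3, h4, h5⟩ := align_to_path x y x y c H 0 0 rfl rfl
    exact ⟨p, ⟨h1, h2, h3, h4⟩, h5⟩

theorem sel_to_idx {B : List ℕ} {r s : ℕ} (H : BSel B r s) : ∀ k, ∃ I : List ℕ, I.length = r ∧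
    (∀ i ∈ I, k + 1 ≤ i ∧ i < k + B.length) ∧ List.IsChain (fun a c => a + 2 ≤ c) I ∧
    (I.map fun i => B.getD (i - (k + 1)) 0).sum = s := by
  induction H with
  | nil B => intro k; exact ⟨[], rfl, by simp, by simp, rfl⟩
  | skip b B r s _ ih =>
    intro k
    obtain ⟨I, h1, h2, h3, h4⟩ := ih (k + 1)
    refine ⟨I, h1, fun i hi => ?_, h3, ?_⟩
    · have := h2 i hi
      simp; omega
    · rw [← h4]
      congr 1
      apply List.map_congr_left
      intro i hi
      have := h2 i hi
      rw [show i - (k + 1) = (i - (k + 1 + 1)) + 1 by omega, List.getD_cons_succ]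
  | take b c B r s _ ih =>
    intro k
    obtain ⟨I, h1, h2, h3, h4⟩ := ih (k + 2)
    refine ⟨(k + 1) :: I, by simp [h1], fun i hi => ?_, ?_, ?_⟩
    · rcases List.mem_cons.1 hi with rfl | hi
      · simp
      · have := h2 i hi
        simp; omega
    · rw [List.isChain_cons]
      refine ⟨fun y hy => ?_, h3⟩
      have := h2 y (List.mem_of_mem_head? hy)
      omega
    · rw [← h4, List.map_cons, List.sum_cons]
      congr 1
      · simp
      congr 1
      apply List.map_congr_left
      intro i hi
      have := h2 i hi
      rw [show i - (k + 1) = (i - (k + 2 + 1)) + 1 + 1 by omega, List.getD_cons_succ,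
        List.getD_cons_succ]

theorem idx_to_sel (N : ℕ) : ∀ (B : List ℕ) (k : ℕ) (I : List ℕ), B.length ≤ N →
    (∀ i ∈ I, k + 1 ≤ i ∧ i < k + B.length) → List.IsChain (fun a c => a + 2 ≤ c) I →
    BSel B I.length (I.map fun i => B.getD (i - (k + 1)) 0).sum := by
  induction N with
  | zero =>
    intro B k I hN hI hc
    cases I with
    | nil => exact .nil _
    | cons i I => have := hI i (by simp); omega
  | succ N ih =>
    intro B k I hN hI hc
    cases I with
    | nil => exact .nil _
    | cons i I =>
    have hi := hI i (by simp)
    have hge : ∀ j ∈ I, i + 2 ≤ j := by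
      have : List.Pairwise (fun a c => a + 2 ≤ c) (i :: I) := by
        have : IsTrans ℕ (fun a c => a + 2 ≤ c) := ⟨fun a b c h1 h2 => by omega⟩
        exact List.isChain_iff_pairwise.1 hc
      exact (List.pairwise_cons.1 this).1
    rcases B with _ | ⟨b, _ | ⟨c, B⟩⟩
    · simp at hi; omega
    · simp at hi; omega
    by_cases hk : i = k + 1
    · subst hk
      have := ih B (k + 2) I (by simp at hN; omega) (fun j hj => by
        have h1 := hI j (by simp [hj])
        have h2 := hge j hj
        simp at h1; omega) hc.tail
      have := BSel.take b c _ _ _ this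
      rw [List.length_cons]
      convert this using 1
      rw [List.map_cons, List.sum_cons]
      congr 1
      · simp
      congr 1
      apply List.map_congr_left
      intro i hi
      have := hge i hi
      rw [show i - (k + 1) = (i - (k + 2 + 1)) + 1 + 1 by omega, List.getD_cons_succ,
        List.getD_cons_succ]
    · have hge2 : ∀ j ∈ i :: I, k + 2 ≤ j := by
        intro j hj
        rcases List.mem_cons.1 hj with rfl | hj
        · omega
        · have := hge j hj; omega
      have := ih (c :: B) (k + 1) (i :: I) (by simp at hN ⊢; omega) (fun j hj => by
        have h1 := hI j hj
        have h2 := hge2 j hj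
        simp at h1 ⊢; omega) hc
      have := BSel.skip b _ _ _ this
      convert this using 1
      congr 1
      apply List.map_congr_left
      intro i hi
      have := hge2 i hi
      rw [show i - (k + 1) = (i - (k + 1 + 1)) + 1 by omega, List.getD_cons_succ]

theorem sel_iff (B : List ℕ) (k r s : ℕ) : BSel B r s ↔ ∃ I : List ℕ, I.length = r ∧
    (∀ i ∈ I, k + 1 ≤ i ∧ i < k + B.length) ∧ List.IsChain (fun a c => a + 2 ≤ c) I ∧
    (I.map fun i => B.getD (i - (k + 1)) 0).sum = s := by
  constructor
  · intro H; exact sel_to_idx H k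
  · rintro ⟨I, rfl, h2, h3, rfl⟩
    exact idx_to_sel _ B k I le_rfl h2 h3

theorem binary_dtw_eq_mss (x y : List Bool) (hx : x ≠ []) (hy : y ≠ [])
    (hhead : x.head? = y.head?) (hlast : x.getLast? = y.getLast?)
    (hm : (condense y).length ≤ (condense x).length) :
    2 ∣ ((condense x).length - (condense y).length) ∧
    dtwSq x y = sInf {s | ∃ I : List ℕ,
        I.length = ((condense x).length - (condense y).length) / 2 ∧
        (∀ i ∈ I, 2 ≤ i ∧ i ≤ (condense x).length - 1) ∧
        List.Chain' (fun a c => a + 2 ≤ c) I ∧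
        (I.map fun i => (blockSizes x).getD (i - 1) 0).sum = s} ∧
    dtwSq x y = mssValue (((blockSizes x).drop 1).dropLast)
        (((condense x).length - (condense y).length) / 2) := by
  simp only [condense_len] at *
  cases x with
  | nil => exact absurd rfl hx
  | cons a x =>
  cases y with
  | nil => exact absurd rfl hy
  | cons b y =>
  obtain rfl : a = b := by simpa using hhead
  have hpar : 2 ∣ ((blockSizes (a :: x)).length - (blockSizes (a :: y)).length) := by
    have h1 := bs_parity a x
    have h2 := bs_parity a y
    rw [hlast, ← h2] at h1
    omega
  have hr : 2 * (((blockSizes (a :: x)).length - (blockSizes (a :: y)).length) / 2) +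
    (blockSizes (a :: y)).length = (blockSizes (a :: x)).length := by omega
  generalize ((blockSizes (a :: x)).length - (blockSizes (a :: y)).length) / 2 = r at hr ⊢
  have main : dtwSq (a :: x) (a :: y) = sInf {s | BSel (blockSizes (a :: x)).tail r s} := by
    rw [dtwSq_eq]
    have hlow : ∀ c, BAlign (a :: x) (a :: y) c →
        ∃ s ≤ c, BSel (blockSizes (a :: x)).tail r s :=
      fun c hc => (balign_lower hc r).1 rfl hr
    have hup : ∀ s, BSel (blockSizes (a :: x)).tail r s → BAlign (a :: x) (a :: y) s :=
      fun s hs => (balign_upper _ x y a le_rfl).1 r s hr hs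
    rcases Set.eq_empty_or_nonempty {c | BAlign (a :: x) (a :: y) c} with he | hne
    · have : {s | BSel (blockSizes (a :: x)).tail r s} = ∅ := by
        ext s
        simp only [Set.mem_setOf_eq, Set.mem_empty_iff_false, iff_false]
        intro h
        have : s ∈ {c | BAlign (a :: x) (a :: y) c} := hup s h
        rw [he] at this
        exact this
      rw [he, this]
    · obtain ⟨s, hs, hB⟩ := hlow _ (Nat.sInf_mem hne)
      apply le_antisymm
      · exact Nat.sInf_le (hup _ (Nat.sInf_mem (s := {s | BSel (blockSizes (a :: x)).tail r s}) ⟨s, hB⟩))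
      · exact le_trans (Nat.sInf_le hB) hs
  refine ⟨hpar, ?_, ?_⟩
  · rw [main]
    congr 1
    ext s
    rw [Set.mem_setOf_eq, sel_iff _ 1]
    obtain ⟨h, t, h1⟩ := bs_cons a x
    rw [h1]
    constructor
    · rintro ⟨I, i1, i2, i3, i4⟩
      refine ⟨I, i1, fun i hi => ?_, i3, ?_⟩
      · have := i2 i hi
        simp at this ⊢; omega
      · rw [← i4]
        congr 1
        apply List.map_congr_left
        intro i hi
        have := i2 i hi
        rw [show i - 1 = (i - (1 + 1)) + 1 by omega, List.getD_cons_succ, List.tail_cons]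
    · rintro ⟨I, i1, i2, i3, i4⟩
      refine ⟨I, i1, fun i hi => ?_, i3, ?_⟩
      · have := i2 i hi
        simp at this ⊢; omega
      · rw [← i4]
        congr 1
        apply List.map_congr_left
        intro i hi
        have := i2 i hi
        rw [show i - 1 = (i - (1 + 1)) + 1 by omega, List.getD_cons_succ, List.tail_cons]
  · rw [main]
    unfold mssValue
    congr 1
    ext s
    rw [Set.mem_setOf_eq, sel_iff _ 0, List.drop_one]
    generalize (blockSizes (a :: x)).tail = B
    have hg : ∀ i, 1 ≤ i → i < B.length → B.dropLast.getD (i - 1) 0 = B.getD (i - 1) 0 := by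
      intro i h1 h2
      rw [List.getD_eq_getElem _ _ (by simp; omega), List.getD_eq_getElem _ _ (by omega),
        List.getElem_dropLast]
    constructor
    · rintro ⟨I, i1, i2, i3, i4⟩
      refine ⟨I, i1, fun i hi => ?_, i3, ?_⟩
      · have := i2 i hi
        simp at this ⊢; omega
      · rw [← i4]
        congr 1
        apply List.map_congr_left
        intro i hi
        have := i2 i hi
        exact hg i (by omega) (by omega)
    · rintro ⟨I, i1, i2, i3, i4⟩
      have i2' : ∀ i ∈ I, 1 ≤ i ∧ i < B.length := fun i hi => by
        have := i2 i hi
        simp at this ⊢; omega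
      refine ⟨I, i1, fun i hi => ?_, i3, ?_⟩
      · have := i2' i hi
        omega
      · rw [← i4]
        congr 1
        apply List.map_congr_left
        intro i hi
        have := i2' i hi
        exact (hg i (by omega) (by omega)).symm
end

section
/- Let x and y be binary strings with m' := |x̃| ≥ n' := |ỹ|, let a' := |x^{(m')}| and b' := |y^{(n')}|, and suppose x[1] = y[1] and x[|x|] ≠ y[|y|]. Then: if n' = 1, then dtw(x,y)² = a' + dtw(x[1, |x|−a'], y)²; and if n' > 1, then dtw(x,y)² = min( a' + dtw(x[1, |x|−a'], y)², b' + dtw(x, y[1, |y|−b'])² ). -/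
inductive Rch (f : ℕ → ℕ → ℕ) : ℕ → ℕ → ℕ → Prop
  | zero : Rch f 0 0 (f 0 0)
  | down {i j c : ℕ} : Rch f i j c → Rch f (i+1) j (c + f (i+1) j)
  | right {i j c : ℕ} : Rch f i j c → Rch f i (j+1) (c + f i (j+1))
  | diag {i j c : ℕ} : Rch f i j c → Rch f (i+1) (j+1) (c + f (i+1) (j+1))

def cst (x y : List Bool) (i j : ℕ) : ℕ := if x.getD i false = y.getD j false then 0 else 1

theorem Rch.congr {f g : ℕ → ℕ → ℕ} {i j c : ℕ} (h : Rch f i j c)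
    (hfg : ∀ i' ≤ i, ∀ j' ≤ j, f i' j' = g i' j') : Rch g i j c := by
  induction h with
  | zero => rw [hfg 0 le_rfl 0 le_rfl]; exact .zero
  | down _ ih => rw [hfg _ le_rfl _ le_rfl]; exact .down (ih fun a ha b hb => hfg a (by omega) b (by omega))
  | right _ ih => rw [hfg _ le_rfl _ le_rfl]; exact .right (ih fun a ha b hb => hfg a (by omega) b (by omega))
  | diag _ ih => rw [hfg _ le_rfl _ le_rfl]; exact .diag (ih fun a ha b hb => hfg a (by omega) b (by omega))

theorem snoc_path {x y : List Bool} {i j c i' j' : ℕ}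
    (h : ∃ p, IsWarpingPath (i+1) (j+1) p ∧ pathCost x y p = c)
    (hs : wpStep (i, j) (i', j')) :
    ∃ p, IsWarpingPath (i'+1) (j'+1) p ∧ pathCost x y p = c + cst x y i' j' := by
  obtain ⟨p, ⟨h1, h2, h3, h4⟩, h5⟩ := h
  refine ⟨p ++ [(i', j')], ⟨?_, ?_, ?_, ?_⟩, ?_⟩
  · cases p <;> simp_all
  · simp
  · unfold List.Chain' at *
    rw [List.isChain_append]
    refine ⟨h3, by simp, ?_⟩
    intro a ha b hb
    simp at h2 hb
    rw [h2] at ha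
    simp at ha
    rw [← ha, ← hb]; exact hs
  · intro q hq
    simp only [List.mem_append, List.mem_singleton] at hq
    have : i ≤ i' ∧ j ≤ j' := by simp [wpStep] at hs; omega
    rcases hq with hq | rfl
    · have := h4 q hq; omega
    · simp
  · unfold pathCost at *
    rw [List.map_append, List.sum_append, h5]; simp [cst]

theorem Rch.path {x y : List Bool} {i j c : ℕ} (h : Rch (cst x y) i j c) :
    ∃ p, IsWarpingPath (i+1) (j+1) p ∧ pathCost x y p = c := by
  induction h with
  | zero => exact ⟨[(0,0)], ⟨by simp, by simp, by simp [List.Chain'], by simp⟩, by simp [pathCost, cst]⟩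
  | down _ ih => exact snoc_path ih (by simp [wpStep])
  | right _ ih => exact snoc_path ih (by simp [wpStep])
  | diag _ ih => exact snoc_path ih (by simp [wpStep])

theorem path_Rch {x y : List Bool} (p : List (ℕ × ℕ)) : ∀ i j,
    p.head? = some (0,0) → p.getLast? = some (i, j) → List.Chain' wpStep p →
    Rch (cst x y) i j (pathCost x y p) := by
  induction p using List.reverseRecOn with
  | nil => simp
  | append_singleton p q ih =>
    intro i j h1 h2 h3
    simp at h2
    subst h2
    have hc : pathCost x y (p ++ [(i,j)]) = pathCost x y p + cst x y i j := by
      simp [pathCost, cst]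
    rw [hc]
    unfold List.Chain' at *
    rw [List.isChain_append] at h3
    obtain ⟨h3, -, h4⟩ := h3
    rcases List.eq_nil_or_concat p with rfl | ⟨p', ⟨a, b⟩, rfl⟩
    · simp at h1
      obtain ⟨rfl, rfl⟩ := h1
      simpa [pathCost] using (Rch.zero (f := cst x y))
    · have hr := ih a b (by cases p' <;> simp_all) (by simp) h3
      have hs := h4 (a,b) (by simp) (i,j) (by simp)
      rcases hs with ⟨e1, e2⟩ | ⟨e1, e2⟩ | ⟨e1, e2⟩ <;> simp only at e1 e2 <;> subst e1 <;> subst e2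
      · exact .down hr
      · exact .right hr
      · exact .diag hr

theorem dtwSq_eq_s3 {x y : List Bool} {m n : ℕ} (hx : x.length = m + 1) (hy : y.length = n + 1) :
    dtwSq x y = sInf {c | Rch (cst x y) m n c} := by
  unfold dtwSq
  congr 1
  ext c
  rw [hx, hy]
  constructor
  · rintro ⟨p, ⟨h1, h2, h3, h4⟩, rfl⟩
    exact path_Rch p m n h1 h2 h3
  · exact fun h => h.path

theorem Rch.downs {f : ℕ → ℕ → ℕ} {i j c : ℕ} (h : Rch f i j c) (k : ℕ)
    (hk : ∀ t, 1 ≤ t → t ≤ k → f (i + t) j = 1) : Rch f (i + k) j (c + k) := by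
  induction k with
  | zero => exact h
  | succ k ih =>
    have := (ih fun t h1 h2 => hk t h1 (by omega)).down
    rw [show i + k + 1 = i + (k+1) by omega, hk (k+1) (by omega) le_rfl] at this
    exact this

theorem Rch.rights {f : ℕ → ℕ → ℕ} {i j c : ℕ} (h : Rch f i j c) (k : ℕ)
    (hk : ∀ t, 1 ≤ t → t ≤ k → f i (j + t) = 1) : Rch f i (j + k) (c + k) := by
  induction k with
  | zero => exact h
  | succ k ih =>
    have := (ih fun t h1 h2 => hk t h1 (by omega)).right
    rw [show j + k + 1 = j + (k+1) by omega, hk (k+1) (by omega) le_rfl] at this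
    exact this

theorem Rch.exists (f : ℕ → ℕ → ℕ) (i j : ℕ) : ∃ c, Rch f i j c := by
  induction i with
  | zero =>
    induction j with
    | zero => exact ⟨_, .zero⟩
    | succ j ih => obtain ⟨c, h⟩ := ih; exact ⟨_, h.right⟩
  | succ i ih => obtain ⟨c, h⟩ := ih; exact ⟨_, h.down⟩

/-- key lower bound; `M` is one less than the start of the last block of `x`. -/
theorem Rch.key {f : ℕ → ℕ → ℕ} {M N m n : ℕ}
    (h1 : ∀ i j, M < i → i ≤ m → N ≤ j → j ≤ n → f i j = 1)
    (h2 : ∀ j, N ≤ j → j ≤ n → f M j = 0)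
    (h3 : ∀ i, M < i → i ≤ m → 1 ≤ N → f i (N - 1) = 0)
    {i j c : ℕ} (h : Rch f i j c) (hi : i ≤ m) (hj : j ≤ n) (hi' : M < i) (hj' : N ≤ j) :
    (∃ c', Rch f M j c' ∧ c' + (i - M) ≤ c) ∨
    (1 ≤ N ∧ ∃ c', Rch f i (N - 1) c' ∧ c' + (j + 1 - N) ≤ c) := by
  induction h with
  | zero => omega
  | @down i j c h ih =>
    rw [h1 _ _ hi' hi hj' hj]
    rcases Nat.lt_or_ge M i with hM | hM
    · rcases ih (by omega) hj hM hj' with ⟨c', a, b⟩ | ⟨hN, c', a, b⟩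
      · exact .inl ⟨c', a, by omega⟩
      · have := a.down
        rw [h3 _ hi' hi hN] at this
        exact .inr ⟨hN, _, this, by omega⟩
    · obtain rfl : i = M := by omega
      exact .inl ⟨c, h, by omega⟩
  | @right i j c h ih =>
    rw [h1 _ _ hi' hi hj' hj]
    rcases Nat.lt_or_ge j N with hN | hN
    · obtain rfl : N = j + 1 := by omega
      exact .inr ⟨by omega, c, h, by omega⟩
    · rcases ih hi (by omega) hi' hN with ⟨c', a, b⟩ | ⟨hN, c', a, b⟩
      · have := a.right
        rw [h2 _ hj' hj] at this
        exact .inl ⟨_, this, by omega⟩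
      · exact .inr ⟨hN, c', a, by omega⟩
  | @diag i j c h ih =>
    rw [h1 _ _ hi' hi hj' hj]
    rcases Nat.lt_or_ge M i with hM | hM
    · rcases Nat.lt_or_ge j N with hN | hN
      · obtain rfl : N = j + 1 := by omega
        have := h.down
        have e := h3 _ hi' hi (by omega)
        simp only [Nat.add_sub_cancel] at e
        rw [e] at this
        exact .inr ⟨by omega, _, this, by omega⟩
      · rcases ih (by omega) (by omega) hM hN with ⟨c', a, b⟩ | ⟨hN, c', a, b⟩
        · have := a.right
          rw [h2 _ hj' hj] at this
          exact .inl ⟨_, this, by omega⟩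
        · have := a.down
          rw [h3 _ hi' hi hN] at this
          exact .inr ⟨hN, _, this, by omega⟩
    · obtain rfl : i = M := by omega
      have := h.right
      rw [h2 _ hj' hj] at this
      exact .inl ⟨_, this, by omega⟩

theorem condense_length (rest : List Bool) : ∀ cur cnt,
    (condense (cur :: rest)).length = (blockSizesAux cur cnt rest).length := by
  induction rest with
  | nil => intros; simp [condense, blockSizesAux]
  | cons a rest ih =>
    intro cur cnt
    simp only [condense, blockSizesAux]
    by_cases h : cur = a
    · subst h; simp [ih cur (cnt+1)]
    · simp [h, Ne.symm h, ih a 1]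

theorem blockSizesAux_spec (rest : List Bool) : ∀ cur cnt, 1 ≤ cnt →
    ∃ pre l a, 1 ≤ a ∧ (blockSizesAux cur cnt rest).getLastD 0 = a ∧
      List.replicate cnt cur ++ rest = pre ++ List.replicate a l ∧
      (pre = [] ∨ ∃ pre', pre = pre' ++ [!l]) ∧
      (pre = [] ↔ (blockSizesAux cur cnt rest).length = 1) ∧ (pre = [] → l = cur) := by
  induction rest with
  | nil => intro cur cnt h; exact ⟨[], cur, cnt, h, by simp [blockSizesAux]⟩
  | cons b rest ih =>
    intro cur cnt h
    simp only [blockSizesAux]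
    by_cases hb : b = cur
    · subst hb
      obtain ⟨pre, l, a, h1, h2, h3, h4⟩ := ih b (cnt+1) (by omega)
      refine ⟨pre, l, a, h1, by simpa using h2, ?_, by simpa using h4⟩
      rw [← h3, List.replicate_succ']; simp
    · obtain ⟨pre, l, a, h1, h2, h3, h4, h5, h6⟩ := ih b 1 le_rfl
      refine ⟨List.replicate cnt cur ++ pre, l, a, h1, ?_, ?_, ?_, ?_, ?_⟩
      · rw [← h2]
        simp only [hb, if_false]
        cases hh : blockSizesAux b 1 rest with
        | nil => simp [hh] at h2; omega
        | cons u v => simp [List.getLastD]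
      · rw [List.append_assoc, ← h3]; simp
      · right
        rcases h4 with rfl | ⟨pre', rfl⟩
        · obtain rfl := h6 rfl
          refine ⟨List.replicate (cnt - 1) cur, ?_⟩
          obtain ⟨k, rfl⟩ : ∃ k, cnt = k + 1 := ⟨cnt - 1, by omega⟩
          have : (!l) = cur := by cases l <;> cases cur <;> simp_all
          rw [this]; simp [List.replicate_succ']
        · exact ⟨List.replicate cnt cur ++ pre', by simp⟩
      · have : cnt ≠ 0 := by omega
        have h7 : (blockSizesAux b 1 rest).length ≠ 0 := by
          intro h; rw [List.length_eq_zero_iff] at h; simp [h] at h2; omega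
        simp only [hb, if_false]
        simp [this]
        intro h; simp [h] at h7
      · intro h; simp at h; omega

theorem block_spec (x : List Bool) (hx : x ≠ []) :
    ∃ pre l a, 1 ≤ a ∧ (blockSizes x).getLastD 0 = a ∧ x = pre ++ List.replicate a l ∧
      (pre = [] ∨ ∃ pre', pre = pre' ++ [!l]) ∧ (pre = [] ↔ (condense x).length = 1) := by
  cases x with
  | nil => simp at hx
  | cons b rest =>
    obtain ⟨pre, l, a, h1, h2, h3, h4, h5, h6⟩ := blockSizesAux_spec rest b 1 le_rfl
    exact ⟨pre, l, a, h1, h2, by simpa using h3, h4, by rw [condense_length rest b 1]; exact h5⟩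

theorem main_ineqs (px : List Bool) (l : Bool) (a : ℕ) (ha : 1 ≤ a) (Y py : List Bool) (b : ℕ)
    (hb : 1 ≤ b) (hY : Y = py ++ List.replicate b (!l))
    (hpy : py = [] ∨ ∃ py', py = py' ++ [l]) (X PX : List Bool) (hPX : PX = px ++ [!l])
    (hX : X = PX ++ List.replicate a l) :
    dtwSq X Y ≤ a + dtwSq PX Y ∧ (py ≠ [] → dtwSq X Y ≤ b + dtwSq X py) ∧
    (a + dtwSq PX Y ≤ dtwSq X Y ∨ (py ≠ [] ∧ b + dtwSq X py ≤ dtwSq X Y)) := by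
  obtain ⟨M, hM⟩ : ∃ M, M = px.length := ⟨_, rfl⟩
  obtain ⟨N, hN⟩ : ∃ N, N = py.length := ⟨_, rfl⟩
  have lPX : PX.length = M + 1 := by simp [hPX, hM]
  have lX : X.length = M + a + 1 := by simp [hX, lPX]; omega
  have lY : Y.length = (N + b - 1) + 1 := by simp [hY, hN]; omega
  have gX : ∀ i, M < i → i ≤ M + a → X.getD i false = l := by
    intro i h1 h2
    rw [hX, List.getD_append_right _ _ _ _ (by omega)]
    rw [List.getD_eq_getElem?_getD, List.getElem?_replicate, if_pos (by omega)]; rfl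
  have gXM : X.getD M false = !l := by
    rw [hX, List.getD_append _ _ _ _ (by omega), hPX, List.getD_append_right _ _ _ _ (by omega)]
    simp [hM]
  have gY : ∀ j, N ≤ j → j ≤ N + b - 1 → Y.getD j false = !l := by
    intro i h1 h2
    rw [hY, List.getD_append_right _ _ _ _ (by omega)]
    rw [List.getD_eq_getElem?_getD, List.getElem?_replicate, if_pos (by omega)]; rfl
  have gYN : 1 ≤ N → Y.getD (N - 1) false = l := by
    intro h
    rcases hpy with rfl | ⟨py', rfl⟩
    · simp at hN; omega
    · rw [hY, List.getD_append _ _ _ _ (by omega), List.getD_append_right _ _ _ _ (by simp at hN; omega)]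
      simp at hN
      simp [hN]
  have c1 : ∀ i ≤ M, ∀ j ≤ N + b - 1, cst X Y i j = cst PX Y i j := by
    intro i hi j hj
    unfold cst
    rw [hX, List.getD_append _ _ _ _ (by omega)]
  have c2 : 1 ≤ N → ∀ i ≤ M + a, ∀ j ≤ N - 1, cst X Y i j = cst X py i j := by
    intro h i hi j hj
    unfold cst
    rw [hY, List.getD_append _ _ _ _ (by omega)]
  have h1 : ∀ i j, M < i → i ≤ M + a → N ≤ j → j ≤ N + b - 1 → cst X Y i j = 1 := by
    intro i j p q r s
    simp [cst, -List.getD_eq_getElem?_getD, gX i p q, gY j r s]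
  have h2 : ∀ j, N ≤ j → j ≤ N + b - 1 → cst X Y M j = 0 := by
    intro j r s
    simp [cst, -List.getD_eq_getElem?_getD, gXM, gY j r s]
  have h3 : ∀ i, M < i → i ≤ M + a → 1 ≤ N → cst X Y i (N - 1) = 0 := by
    intro i p q r
    simp [cst, -List.getD_eq_getElem?_getD, gX i p q, gYN r]
  have hne : py ≠ [] ↔ 1 ≤ N := by
    rw [hN, ← List.length_pos_iff]; exact Iff.rfl
  rw [hne, dtwSq_eq_s3 lX lY, dtwSq_eq_s3 lPX lY]
  refine ⟨?_, ?_, ?_⟩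
  · have := Nat.sInf_mem (Rch.exists (cst PX Y) M (N + b - 1))
    have := (Rch.congr this (fun i hi j hj => (c1 i hi j hj).symm)).downs a
      (fun t p q => h1 _ _ (by omega) (by omega) (by omega) le_rfl)
    rw [add_comm a]
    exact Nat.sInf_le this
  · intro h
    rw [dtwSq_eq_s3 lX (show py.length = (N - 1) + 1 by omega)]
    have := Nat.sInf_mem (Rch.exists (cst X py) (M + a) (N - 1))
    have := (Rch.congr this (fun i hi j hj => (c2 h i hi j hj).symm)).rights b
      (fun t p q => h1 _ _ (by omega) (by omega) (by omega) (by omega))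
    rw [show N - 1 + b = N + b - 1 by omega] at this
    rw [add_comm b]
    exact Nat.sInf_le this
  · have := Nat.sInf_mem (s := {c | Rch (cst X Y) (M + a) (N + b - 1) c}) (Rch.exists (cst X Y) (M + a) (N + b - 1))
    rcases Rch.key h1 h2 h3 this le_rfl le_rfl (by omega) (by omega) with ⟨c', p, q⟩ | ⟨h, c', p, q⟩
    · left
      have := Nat.sInf_le (s := {c | Rch (cst PX Y) M (N + b - 1) c}) (p.congr c1)
      omega
    · right
      refine ⟨h, ?_⟩
      rw [dtwSq_eq_s3 lX (show py.length = (N - 1) + 1 by omega)]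
      have := Nat.sInf_le (s := {c | Rch (cst X py) (M + a) (N - 1) c}) (p.congr (c2 h))
      omega

/-- recursive case distinction for `dtw(x,y)²` when the first
symbols of `x` and `y` agree but the last symbols differ, where
`a' = |x^{(m')}|` and `b' = |y^{(n')}|` are the last block sizes. -/
theorem dtwSq_last_symbol_differs (x y : List Bool) (hx : x ≠ []) (hy : y ≠ [])
    (hm : (condense y).length ≤ (condense x).length)
    (hhead : x.head? = y.head?) (hlast : x.getLast? ≠ y.getLast?) :
    ((condense y).length = 1 →
      dtwSq x y = (blockSizes x).getLastD 0 +
        dtwSq (x.take (x.length - (blockSizes x).getLastD 0)) y) ∧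
    (1 < (condense y).length →
      dtwSq x y = min
        ((blockSizes x).getLastD 0 +
          dtwSq (x.take (x.length - (blockSizes x).getLastD 0)) y)
        ((blockSizes y).getLastD 0 +
          dtwSq x (y.take (y.length - (blockSizes y).getLastD 0)))) := by
  obtain ⟨px, l, a, ha, hax, hX, hpx, hpx1⟩ := block_spec x hx
  obtain ⟨py, l', b, hb, hby, hY, hpy, hpy1⟩ := block_spec y hy
  have hl : l' = !l := by
    have e1 : x.getLast? = some l := by
      rw [hX]; obtain ⟨k, rfl⟩ : ∃ k, a = k + 1 := ⟨a - 1, by omega⟩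
      rw [List.replicate_succ', ← List.append_assoc, List.getLast?_concat]
    have e2 : y.getLast? = some l' := by
      rw [hY]; obtain ⟨k, rfl⟩ : ∃ k, b = k + 1 := ⟨b - 1, by omega⟩
      rw [List.replicate_succ', ← List.append_assoc, List.getLast?_concat]
    rw [e1, e2] at hlast
    cases l <;> cases l' <;> simp_all
  subst hl
  have hpxne : px ≠ [] := by
    intro h
    have h1 := hpx1.1 h
    have hy0 : (condense y).length ≠ 0 := by
      cases y with
      | nil => simp at hy
      | cons c r =>
        rw [condense_length r c 1]
        intro h0
        rw [List.length_eq_zero_iff] at h0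
        simp [blockSizes, h0] at hby
        omega
    have h2 := hpy1.2 (by omega)
    rw [hX, hY, h, h2] at hhead
    obtain ⟨k, rfl⟩ : ∃ k, a = k + 1 := ⟨a - 1, by omega⟩
    obtain ⟨k', rfl⟩ : ∃ k, b = k + 1 := ⟨b - 1, by omega⟩
    simp [List.replicate_succ] at hhead
  obtain ⟨px', hpx'⟩ := hpx.resolve_left hpxne
  have tx : x.take (x.length - a) = px := by rw [hX]; simp
  have ty : y.take (y.length - b) = py := by rw [hY]; simp
  rw [hax, hby, tx, ty]
  obtain ⟨i1, i2, i3⟩ := main_ineqs px' l a ha y py b hb hY (by simpa using hpy) x px hpx' hX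
  constructor
  · intro h
    have := hpy1.2 h
    rcases i3 with i3 | i3
    · omega
    · exact absurd this i3.1
  · intro h
    have hne : py ≠ [] := fun h' => by have := hpy1.1 h'; omega
    have := i2 hne
    omega
end

section
/- For all binary strings x and y, dtw(x̃, y) ≤ dtw(x, y), where x̃ is the condensation of x. -/
theorem aux_snoc (p : List (ℕ × ℕ)) (a b c : ℕ × ℕ) (h1 : p.head? = some c)
    (h2 : p.getLast? = some a) (h3 : List.IsChain wpStep p) (h : wpStep a b) :
    (p ++ [b]).head? = some c ∧ (p ++ [b]).getLast? = some b ∧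
      List.IsChain wpStep (p ++ [b]) := by
  refine ⟨by simp [List.head?_append, h1], by simp, ?_⟩
  rw [List.isChain_append]
  refine ⟨h3, by simp, ?_⟩
  intro u hu v hv
  rw [h2] at hu
  simp at hu hv
  subst hu; subst hv; exact h

theorem aux_exists (a b : ℕ) : ∃ p : List (ℕ × ℕ), p.head? = some (0, 0) ∧
    p.getLast? = some (a, b) ∧ List.IsChain wpStep p ∧ ∀ q ∈ p, q.1 ≤ a ∧ q.2 ≤ b := by
  induction a with
  | zero =>
    induction b with
    | zero => exact ⟨[(0, 0)], by simp⟩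
    | succ b ih =>
      obtain ⟨p, h1, h2, h3, h4⟩ := ih
      obtain ⟨k1, k2, k3⟩ := aux_snoc p (0, b) (0, b + 1) _ h1 h2 h3 (by simp [wpStep])
      refine ⟨_, k1, k2, k3, ?_⟩
      intro q hq
      rcases List.mem_append.1 hq with hq | hq
      · have := h4 q hq; omega
      · simp at hq; subst hq; simp
  | succ a ih =>
    obtain ⟨p, h1, h2, h3, h4⟩ := ih
    obtain ⟨k1, k2, k3⟩ := aux_snoc p (a, b) (a + 1, b) _ h1 h2 h3 (by simp [wpStep])
    refine ⟨_, k1, k2, k3, ?_⟩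
    intro q hq
    rcases List.mem_append.1 hq with hq | hq
    · have := h4 q hq; omega
    · simp at hq; subst hq; simp

theorem aux_dedup (w : ℕ × ℕ → ℕ) (p : List (ℕ × ℕ))
    (h : List.IsChain (fun a b => a = b ∨ wpStep a b) p) :
    ∃ p' : List (ℕ × ℕ), p'.head? = p.head? ∧ p'.getLast? = p.getLast? ∧
      List.IsChain wpStep p' ∧ (∀ q ∈ p', q ∈ p) ∧ (p'.map w).sum ≤ (p.map w).sum := by
  induction p with
  | nil => exact ⟨[], by simp⟩
  | cons a p ih =>
    cases p with
    | nil => exact ⟨[a], by simp⟩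
    | cons b r =>
      rw [List.isChain_cons_cons] at h
      obtain ⟨p', h1, h2, h3, h4, h5⟩ := ih h.2
      rcases h.1 with e | e
      · subst e
        refine ⟨p', by simpa using h1, by simpa using h2, h3, ?_, ?_⟩
        · intro q hq; exact List.mem_cons_of_mem _ (h4 q hq)
        · rw [List.map_cons, List.sum_cons]; omega
      · cases p' with
        | nil => simp at h1
        | cons c s =>
          simp at h1; subst h1
          refine ⟨a :: c :: s, by simp, by simpa using h2, ?_, ?_, ?_⟩
          · rw [List.isChain_cons_cons]; exact ⟨e, h3⟩
          · intro q hq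
            rcases List.mem_cons.1 hq with hq | hq
            · subst hq; simp
            · exact List.mem_cons_of_mem _ (h4 q hq)
          · rw [List.map_cons, List.sum_cons, List.map_cons (l := c :: r), List.sum_cons]; omega

theorem aux_f (x : List Bool) (hx : x ≠ []) : ∃ f : ℕ → ℕ, f 0 = 0 ∧
    (∀ i, i + 1 < x.length → f (i + 1) = f i ∨ f (i + 1) = f i + 1) ∧
    f (x.length - 1) = (condense x).length - 1 ∧
    ∀ i, i < x.length → f i < (condense x).length ∧
      (condense x).getD (f i) false = x.getD i false := by
  induction x with
  | nil => exact absurd rfl hx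
  | cons a x ih =>
    cases x with
    | nil => exact ⟨fun _ => 0, by simp [condense]⟩
    | cons b r =>
      obtain ⟨f, h0, h1, h2, h3⟩ := ih (by simp)
      have hp := h3 0 (by simp)
      by_cases e : a = b
      · subst e
        have hc : condense (a :: a :: r) = condense (a :: r) := by simp [condense]
        rw [hc]
        refine ⟨fun i => f (i - 1), h0, ?_, by simpa using h2, ?_⟩
        · intro i hi
          cases i with
          | zero => simp
          | succ i => simpa using h1 i (by simpa using hi)
        · intro i hi
          cases i with
          | zero => simpa [h0] using hp
          | succ i => simpa using h3 i (by simpa using hi)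
      · have hc : condense (a :: b :: r) = a :: condense (b :: r) := by simp [condense, e]
        rw [hc]
        refine ⟨fun i => if i = 0 then 0 else f (i - 1) + 1, rfl, ?_, ?_, ?_⟩
        · intro i hi
          cases i with
          | zero => simp [h0]
          | succ i => simpa using h1 i (by simpa using hi)
        · simp at h2 ⊢
          omega
        · intro i hi
          cases i with
          | zero => simp
          | succ i => simpa using h3 i (by simpa using hi)

/-- condensing a string does not increase the dtw distance. -/
theorem dtw_condense_le (x y : List Bool) (hx : x ≠ []) (hy : y ≠ []) :
    dtw (condense x) y ≤ dtw x y := by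
  unfold dtw
  apply Real.sqrt_le_sqrt
  rw [Nat.cast_le]
  have hxl := List.length_pos_iff.2 hx
  have hyl := List.length_pos_iff.2 hy
  have hne : {c | ∃ p, IsWarpingPath x.length y.length p ∧ pathCost x y p = c}.Nonempty := by
    obtain ⟨p, h1, h2, h3, h4⟩ := aux_exists (x.length - 1) (y.length - 1)
    refine ⟨_, p, ⟨h1, h2, h3, ?_⟩, rfl⟩
    intro q hq
    have := h4 q hq
    omega
  obtain ⟨p, ⟨h1, h2, h3, h4⟩, hc⟩ := Nat.sInf_mem hne
  obtain ⟨f, f0, f1, f2, f3⟩ := aux_f x hx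
  have h3' : List.IsChain wpStep p := h3
  have hch : List.IsChain (fun a b => a = b ∨ wpStep a b)
      (p.map fun q => (f q.1, q.2)) := by
    rw [List.isChain_map]
    rw [List.isChain_iff_getElem] at h3' ⊢
    intro i hi
    have hs := h3' i hi
    have hb := h4 _ (List.getElem_mem hi)
    generalize p[i + 1] = v at *
    generalize p[i] = u at *
    obtain ⟨u1, u2⟩ := u
    obtain ⟨v1, v2⟩ := v
    simp only [wpStep, Prod.mk.injEq] at hs hb ⊢
    rcases hs with ⟨rfl, rfl⟩ | ⟨rfl, rfl⟩ | ⟨rfl, rfl⟩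
    · have := f1 u1 hb.1; omega
    · omega
    · have := f1 u1 hb.1; omega
  obtain ⟨p', k1, k2, k3, k4, k5⟩ := aux_dedup
    (fun q => if (condense x).getD q.1 false = y.getD q.2 false then 0 else 1) _ hch
  have hle : pathCost (condense x) y p' ≤ pathCost x y p := by
    refine le_trans k5 (le_of_eq ?_)
    unfold pathCost
    rw [List.map_map]
    congr 1
    apply List.map_congr_left
    intro q hq
    simp only [Function.comp]
    rw [(f3 q.1 (h4 q hq).1).2]
  have hmem : dtwSq (condense x) y ≤ pathCost (condense x) y p' := by
    apply Nat.sInf_le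
    refine ⟨p', ⟨?_, ?_, k3, ?_⟩, rfl⟩
    · rw [k1]; simp [h1, f0]
    · rw [k2]; simp [h2, f2]
    · intro q hq
      obtain ⟨u, hu, rfl⟩ := List.mem_map.1 (k4 q hq)
      exact ⟨(f3 _ (h4 u hu).1).1, (h4 u hu).2⟩
  exact hmem.trans (hle.trans (le_of_eq hc))
end

section
/- Let x be a condensed binary string of length ℓ and let x' be the condensed string of length ℓ + 2 obtained from x by appending the two symbols 1 − x[ℓ] and x[ℓ]. Then for every binary string s with ℓ < |s̃| ≤ ℓ + 2 it holds that dtw(x', s)² ≤ dtw(x, s)². -/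
inductive WAl : List Bool → List Bool → ℕ → Prop
  | base (a b : Bool) : WAl [a] [b] (if a = b then 0 else 1)
  | down (a b : Bool) (x s : List Bool) (c : ℕ) (h : WAl x (b :: s) c) :
      WAl (a :: x) (b :: s) ((if a = b then 0 else 1) + c)
  | right (a b : Bool) (x s : List Bool) (c : ℕ) (h : WAl (a :: x) s c) :
      WAl (a :: x) (b :: s) ((if a = b then 0 else 1) + c)
  | diag (a b : Bool) (x s : List Bool) (c : ℕ) (h : WAl x s c) :
      WAl (a :: x) (b :: s) ((if a = b then 0 else 1) + c)

theorem WAl.ne {x s : List Bool} {c : ℕ} (h : WAl x s c) : x ≠ [] ∧ s ≠ [] := by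
  cases h <;> simp

theorem WAl.exists_row (a : Bool) (s : List Bool) (hs : s ≠ []) : ∃ c, WAl [a] s c := by
  induction s with
  | nil => exact absurd rfl hs
  | cons b s ih =>
    by_cases h : s = []
    · subst h; exact ⟨_, WAl.base a b⟩
    · obtain ⟨c, hc⟩ := ih h
      exact ⟨_, WAl.right a b _ _ c hc⟩

theorem WAl.exists (x s : List Bool) (hx : x ≠ []) (hs : s ≠ []) : ∃ c, WAl x s c := by
  induction x with
  | nil => exact absurd rfl hx
  | cons a x ih =>
    by_cases h : x = []
    · subst h; exact WAl.exists_row a s hs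
    · obtain ⟨c, hc⟩ := ih h
      obtain ⟨b, s, rfl⟩ := List.exists_cons_of_ne_nil hs
      exact ⟨_, WAl.down a b _ _ c hc⟩

theorem ext_eq (a : Bool) (x : List Bool) (hc : List.IsChain (· ≠ ·) (a :: x)) :
    (a :: x) ++ [!(a :: x).getLastD false, (a :: x).getLastD false] = a :: (!a) :: a :: x := by
  induction x generalizing a with
  | nil => simp
  | cons b r ih =>
    rw [List.isChain_cons_cons] at hc
    have h1 := ih b hc.2
    have hb : b = !a := by
      have := hc.1
      revert this; cases a <;> cases b <;> simp
    have h2 : (a :: b :: r).getLastD false = (b :: r).getLastD false := by simp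
    rw [h2, List.cons_append, h1, hb]; simp

theorem condense_cons (b b' : Bool) (s : List Bool) :
    (condense (b :: b' :: s)).length =
      (condense (b' :: s)).length + (if b = b' then 0 else 1) := by
  rw [condense]; split_ifs <;> simp

theorem WAl.extend {x s : List Bool} {c : ℕ} (h : WAl x s c)
    (hc : List.IsChain (· ≠ ·) x) (hlo : x.length < (condense s).length) :
    ∃ c' ≤ c, WAl (x ++ [!x.getLastD false, x.getLastD false]) s c' := by
  induction h with
  | base a b => simp [condense] at hlo
  | down a b x s c h ih =>
    obtain ⟨d, x, rfl⟩ := List.exists_cons_of_ne_nil h.ne.1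
    obtain ⟨c', hc', hw⟩ := ih (List.isChain_cons_cons.1 hc).2 (by simp at hlo ⊢; omega)
    refine ⟨_, Nat.add_le_add_left hc' _, ?_⟩
    have := WAl.down a b _ _ _ hw
    simpa using this
  | diag a b x s c h ih =>
    obtain ⟨d, x, rfl⟩ := List.exists_cons_of_ne_nil h.ne.1
    obtain ⟨e, s, rfl⟩ := List.exists_cons_of_ne_nil h.ne.2
    rw [condense_cons] at hlo
    obtain ⟨c', hc', hw⟩ := ih (List.isChain_cons_cons.1 hc).2
      (by simp only [List.length_cons] at hlo ⊢; split_ifs at hlo <;> omega)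
    refine ⟨_, Nat.add_le_add_left hc' _, ?_⟩
    have := WAl.diag a b _ _ _ hw
    simpa using this
  | right a b x s c h ih =>
    obtain ⟨e, s, rfl⟩ := List.exists_cons_of_ne_nil h.ne.2
    rw [condense_cons] at hlo
    by_cases hl : (a :: x).length < (condense (e :: s)).length
    · obtain ⟨c', hc', hw⟩ := ih hc hl
      refine ⟨_, Nat.add_le_add_left hc' _, ?_⟩
      exact WAl.right a b _ _ _ hw
    · have hbe : b ≠ e := by
        rintro rfl
        simp at hlo hl; omega
      rw [ext_eq a x hc]
      by_cases hab : b = a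
      · subst hab
        have he : e = !b := by revert hbe; cases b <;> cases e <;> simp
        subst he
        exact ⟨_, by simp, WAl.diag b b _ _ _ (WAl.down (!b) (!b) _ _ _ h)⟩
      · have he : b = !a := by revert hab; cases b <;> cases a <;> simp
        subst he
        exact ⟨_, by simp, WAl.down a (!a) _ _ _ (WAl.diag (!a) (!a) _ _ _ h)⟩

theorem drop_getD (x : List Bool) (i : ℕ) (h : i < x.length) :
    x.drop i = x.getD i false :: x.drop (i + 1) := by
  rw [List.drop_eq_getElem_cons h]; simp [h]

theorem drop_inv {x u : List Bool} {i : ℕ} {a : Bool} (h : x.drop i = a :: u) :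
    i < x.length ∧ x.getD i false = a ∧ x.drop (i + 1) = u := by
  have hi : i < x.length := by
    by_contra hn
    rw [List.drop_eq_nil_of_le (by omega)] at h
    cases h
  rw [drop_getD x i hi] at h
  injection h with h1 h2
  exact ⟨hi, h1, h2⟩

theorem path_to_WAl (x y : List Bool) (p : List (ℕ × ℕ)) (i j : ℕ)
    (hl : (((i, j) :: p).getLast? = some (x.length - 1, y.length - 1)))
    (hc : List.IsChain wpStep ((i, j) :: p))
    (hr : ∀ q ∈ (i, j) :: p, q.1 < x.length ∧ q.2 < y.length) :
    WAl (x.drop i) (y.drop j) (pathCost x y ((i, j) :: p)) := by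
  induction p generalizing i j with
  | nil =>
    have h := hr (i, j) (by simp)
    simp at hl h
    obtain ⟨h1, h2⟩ := hl
    rw [drop_getD x i h.1, drop_getD y j h.2, List.drop_eq_nil_of_le (by omega),
      List.drop_eq_nil_of_le (by omega)]
    simpa [pathCost] using WAl.base (x.getD i false) (y.getD j false)
  | cons q p ih =>
    obtain ⟨k, l⟩ := q
    have h := hr (i, j) (by simp)
    simp only at h
    rw [List.isChain_cons_cons] at hc
    have hw := ih k l (by simpa using hl) hc.2 (fun q hq => hr q (List.mem_cons_of_mem _ hq))
    have hcost : pathCost x y ((i, j) :: (k, l) :: p) =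
      (if x.getD i false = y.getD j false then 0 else 1) + pathCost x y ((k, l) :: p) := by
      simp [pathCost]
    rw [hcost]
    rcases hc.1 with ⟨h1, h2⟩ | ⟨h1, h2⟩ | ⟨h1, h2⟩ <;> simp only at h1 h2 <;> subst h1 h2
    · rw [drop_getD x i h.1]
      rw [drop_getD y _ h.2] at hw ⊢
      exact WAl.down _ _ _ _ _ hw
    · rw [drop_getD y j h.2]
      rw [drop_getD x _ h.1] at hw ⊢
      exact WAl.right _ _ _ _ _ hw
    · rw [drop_getD y j h.2, drop_getD x i h.1]
      exact WAl.diag _ _ _ _ _ hw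

theorem path_cons (x y : List Bool) (i j k l c : ℕ) (hi : i < x.length) (hj : j < y.length)
    (hst : wpStep (i, j) (k, l))
    (h : ∃ p, ((k, l) :: p).getLast? = some (x.length - 1, y.length - 1) ∧
      List.IsChain wpStep ((k, l) :: p) ∧
      (∀ q ∈ (k, l) :: p, q.1 < x.length ∧ q.2 < y.length) ∧
      pathCost x y ((k, l) :: p) = c) :
    ∃ p, ((i, j) :: p).getLast? = some (x.length - 1, y.length - 1) ∧
      List.IsChain wpStep ((i, j) :: p) ∧
      (∀ q ∈ (i, j) :: p, q.1 < x.length ∧ q.2 < y.length) ∧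
      pathCost x y ((i, j) :: p) = (if x.getD i false = y.getD j false then 0 else 1) + c := by
  obtain ⟨p, h1, h2, h3, h4⟩ := h
  refine ⟨(k, l) :: p, by simpa using h1, List.isChain_cons_cons.2 ⟨hst, h2⟩, ?_, ?_⟩
  · intro q hq
    rcases List.mem_cons.1 hq with rfl | hq
    · exact ⟨hi, hj⟩
    · exact h3 q hq
  · rw [← h4]; simp [pathCost]

theorem WAl_to_path (x y u v : List Bool) (c : ℕ) (h : WAl u v c) (i j : ℕ)
    (hu : x.drop i = u) (hv : y.drop j = v) :
    ∃ p, ((i, j) :: p).getLast? = some (x.length - 1, y.length - 1) ∧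
      List.IsChain wpStep ((i, j) :: p) ∧
      (∀ q ∈ (i, j) :: p, q.1 < x.length ∧ q.2 < y.length) ∧
      pathCost x y ((i, j) :: p) = c := by
  induction h generalizing i j with
  | base a b =>
    obtain ⟨h1, h2, h3⟩ := drop_inv hu
    obtain ⟨g1, g2, g3⟩ := drop_inv hv
    rw [List.drop_eq_nil_iff] at h3 g3
    refine ⟨[], ?_, by simp, by simp [h1, g1], ?_⟩
    · simp; omega
    · subst h2 g2; simp [pathCost]
  | down a b u v c h ih =>
    obtain ⟨h1, h2, h3⟩ := drop_inv hu
    obtain ⟨g1, g2, g3⟩ := drop_inv hv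
    subst h2 g2
    exact path_cons x y i j (i+1) j c h1 g1 (by simp [wpStep]) (ih _ _ h3 hv)
  | right a b u v c h ih =>
    obtain ⟨h1, h2, h3⟩ := drop_inv hu
    obtain ⟨g1, g2, g3⟩ := drop_inv hv
    subst h2 g2
    exact path_cons x y i j i (j+1) c h1 g1 (by simp [wpStep]) (ih _ _ hu g3)
  | diag a b u v c h ih =>
    obtain ⟨h1, h2, h3⟩ := drop_inv hu
    obtain ⟨g1, g2, g3⟩ := drop_inv hv
    subst h2 g2
    exact path_cons x y i j (i+1) (j+1) c h1 g1 (by simp [wpStep]) (ih _ _ h3 g3)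

theorem WAl_iff (x y : List Bool) (c : ℕ) :
    (∃ p, IsWarpingPath x.length y.length p ∧ pathCost x y p = c) ↔ WAl x y c := by
  constructor
  · rintro ⟨p, ⟨h1, h2, h3, h4⟩, rfl⟩
    cases p with
    | nil => simp at h1
    | cons q p =>
      simp at h1
      subst h1
      simpa using path_to_WAl x y p 0 0 h2 h3 h4
  · intro h
    obtain ⟨p, h1, h2, h3, h4⟩ := WAl_to_path x y x y c h 0 0 rfl rfl
    exact ⟨_, ⟨rfl, h1, h2, h3⟩, h4⟩

/-- extending a condensed string `x` of length `ℓ` by the two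
symbols `1 - x[ℓ]`, `x[ℓ]` does not increase the squared dtw distance to any
string `s` with `ℓ < |s̃| ≤ ℓ + 2`. -/
theorem extend_not_increase_dtwSq (x : List Bool) (hx : x ≠ [])
    (hc : List.Chain' (· ≠ ·) x) (s : List Bool) (hs : s ≠ [])
    (hlo : x.length < (condense s).length)
    (hhi : (condense s).length ≤ x.length + 2) :
    dtwSq (x ++ [!x.getLastD false, x.getLastD false]) s ≤ dtwSq x s := by
  have hne : {c | ∃ p, IsWarpingPath x.length s.length p ∧ pathCost x s p = c}.Nonempty := by
    obtain ⟨c, h⟩ := WAl.exists x s hx hs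
    exact ⟨c, (WAl_iff _ _ _).2 h⟩
  have hm := (WAl_iff x s (dtwSq x s)).1 (Nat.sInf_mem hne)
  obtain ⟨c', hle, hw⟩ := hm.extend hc hlo
  exact (Nat.sInf_le ((WAl_iff _ _ _).2 hw)).trans hle
end

section
/- Let x be a condensed binary string of length ℓ and let x' be the condensed string of length ℓ + 2 obtained from x by appending the two symbols 1 − x[ℓ] and x[ℓ]. Then for every binary string s with |s̃| ≤ ℓ it holds that dtw(x', s)² ≤ dtw(x, s)² + 1. -/
theorem aux_snoc_s11 {m n : ℕ} {p : List (ℕ × ℕ)} (h : IsWarpingPath (m+1) (n+1) p) (m' n' : ℕ)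
    (hs : wpStep (m, n) (m', n')) : IsWarpingPath (m'+1) (n'+1) (p ++ [(m', n')]) := by
  obtain ⟨h1, h2, h3, h4⟩ := h
  refine ⟨?_, by simp, ?_, ?_⟩
  · cases p with
    | nil => simp at h1
    | cons a t => simpa using h1
  · refine List.IsChain.append h3 (by simp) ?_
    intro a ha b hb
    rw [h2] at ha
    simp at ha hb
    subst ha; subst hb
    exact hs
  · intro q hq
    rcases List.mem_append.1 hq with hq | hq
    · have := h4 q hq
      simp only [wpStep] at hs
      omega
    · simp at hq
      subst hq
      simp

theorem aux_exists_s11 (m n : ℕ) : ∃ p, IsWarpingPath (m+1) (n+1) p := by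
  induction m with
  | zero =>
    induction n with
    | zero => exact ⟨[(0,0)], by simp, by simp, List.IsChain.singleton _, by simp⟩
    | succ n ih =>
      obtain ⟨p, hp⟩ := ih
      exact ⟨_, aux_snoc_s11 hp 0 (n+1) (by simp [wpStep])⟩
  | succ m ih =>
    obtain ⟨p, hp⟩ := ih
    exact ⟨_, aux_snoc_s11 hp (m+1) n (by simp [wpStep])⟩

/-- extending a condensed string `x` of length `ℓ` by the two
symbols `1 - x[ℓ]`, `x[ℓ]` increases the squared dtw distance to any string
`s` with `|s̃| ≤ ℓ` by at most one. -/
theorem extend_increase_dtwSq_by_at_most_one (x : List Bool) (hx : x ≠ [])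
    (hc : List.Chain' (· ≠ ·) x) (s : List Bool) (hs : s ≠ [])
    (hlen : (condense s).length ≤ x.length) :
    dtwSq (x ++ [!x.getLastD false, x.getLastD false]) s ≤ dtwSq x s + 1 := by
  obtain ⟨m, hm⟩ : ∃ m, x.length = m + 1 := Nat.exists_eq_succ_of_ne_zero (by simpa using hx)
  obtain ⟨n, hn⟩ : ∃ n, s.length = n + 1 := Nat.exists_eq_succ_of_ne_zero (by simpa using hs)
  have hne : {c | ∃ p, IsWarpingPath x.length s.length p ∧ pathCost x s p = c}.Nonempty := by
    obtain ⟨p, hp⟩ := aux_exists_s11 m n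
    exact ⟨_, p, by rw [hm, hn]; exact hp, rfl⟩
  obtain ⟨p, hp, hcost⟩ := Nat.sInf_mem hne
  change pathCost x s p = dtwSq x s at hcost
  rw [← hcost]
  generalize x.getLastD false = b
  have hb := hp.2.2.2
  rw [hm, hn] at hp
  have hp2 := aux_snoc_s11 (aux_snoc_s11 hp (m+1) n (by simp [wpStep])) (m+2) n (by simp [wpStep])
  refine (Nat.sInf_le ⟨_, ?_, rfl⟩ : dtwSq _ s ≤ pathCost _ s (p ++ [(m+1, n)] ++ [(m+2, n)])).trans ?_
  · simpa [hm, hn] using hp2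
  · have e : p.map (fun q => if (x ++ [!b, b]).getD q.1 false = s.getD q.2 false then 0 else 1)
        = p.map (fun q => if x.getD q.1 false = s.getD q.2 false then 0 else 1) := by
      apply List.map_congr_left
      intro q hq
      rw [List.getD_append _ _ _ _ (hb q hq).1]
    have e1 : (x ++ [!b, b]).getD (m+1) false = !b := by
      rw [List.getD_append_right _ _ _ _ (by omega)]; simp [hm]
    have e2 : (x ++ [!b, b]).getD (m+2) false = b := by
      rw [List.getD_append_right _ _ _ _ (by omega)]; simp [hm]
    simp only [pathCost, List.map_append, List.sum_append, e, List.map_cons, List.map_nil, e1, e2,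
      List.sum_cons, List.sum_nil]
    cases b <;> cases s.getD n false <;> simp
end
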